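/- Let f: A → B be a surjective homomorphism of MV-algebras, and suppose there exist an MV-algebra C and a surjective homomorphism g: C → B such that the projection π_C: A×_B C → C (where A×_B C := {(a,c) ∈ A×C : f(a)=g(c)}) restricts to a bijection Rad(A×_B C) → Rad(C). Then ker(f) ∩ Rad(A) = {0}, i.e. the restriction of f to Rad(A) is injective. Hence every central extension for the Galois structure of the semisimple reflection is a normal extension. -/

import Mathlib

namespace MVPaper

/-- An MV-algebra: a set with a binary `⊕`, a unary `¬`, and a constant `0`
satisfying the MV-algebra axioms. -/
class MV (α : Type*) where
  oplus : α → α → α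
  neg : α → α
  zero : α
  oplus_assoc : ∀ x y z : α, oplus x (oplus y z) = oplus (oplus x y) z
  oplus_comm : ∀ x y : α, oplus x y = oplus y x
  oplus_zero : ∀ x : α, oplus x zero = x
  neg_neg : ∀ x : α, neg (neg x) = x
  oplus_neg_zero : ∀ x : α, oplus x (neg zero) = neg zero
  lukasiewicz : ∀ x y : α,
    oplus (neg (oplus (neg x) y)) y = oplus (neg (oplus (neg y) x)) x

namespace MV

variable {α : Type*} [MV α]

/-- `1 := ¬0`. -/
def one : α := neg zero

/-- `x ⊙ y := ¬(¬x ⊕ ¬y)`. -/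
def odot (x y : α) : α := neg (oplus (neg x) (neg y))

/-- `x ⊖ y := ¬(¬x ⊕ y)`. -/
def ominus (x y : α) : α := neg (oplus (neg x) y)

/-- `d(x,y) := (x ⊖ y) ⊕ (y ⊖ x)`. -/
def dist (x y : α) : α := oplus (ominus x y) (ominus y x)

/-- The natural order: `x ≤ y` iff `¬x ⊕ y = 1`. -/
def le (x y : α) : Prop := oplus (neg x) y = one

/-- `x ∨ y := (x ⊖ y) ⊕ y`. -/
def sup (x y : α) : α := oplus (ominus x y) y

/-- `x ∧ y := x ⊙ (¬x ⊕ y)`. -/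
def inf (x y : α) : α := odot x (oplus (neg x) y)

/-- `n · a`, the `n`-fold sum `a ⊕ ⋯ ⊕ a`. -/
def nsmul : ℕ → α → α
  | 0, _ => zero
  | n + 1, a => oplus a (nsmul n a)

end MV

/-- Products of MV-algebras, with componentwise operations. -/
instance prodMV {α β : Type*} [MV α] [MV β] : MV (α × β) where
  oplus x y := (MV.oplus x.1 y.1, MV.oplus x.2 y.2)
  neg x := (MV.neg x.1, MV.neg x.2)
  zero := (MV.zero, MV.zero)
  oplus_assoc x y z :=
    congrArg₂ Prod.mk (MV.oplus_assoc _ _ _) (MV.oplus_assoc _ _ _)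
  oplus_comm x y :=
    congrArg₂ Prod.mk (MV.oplus_comm _ _) (MV.oplus_comm _ _)
  oplus_zero x := by
    obtain ⟨a, b⟩ := x
    exact congrArg₂ Prod.mk (MV.oplus_zero a) (MV.oplus_zero b)
  neg_neg x := by
    obtain ⟨a, b⟩ := x
    exact congrArg₂ Prod.mk (MV.neg_neg a) (MV.neg_neg b)
  oplus_neg_zero x :=
    congrArg₂ Prod.mk (MV.oplus_neg_zero _) (MV.oplus_neg_zero _)
  lukasiewicz x y :=
    congrArg₂ Prod.mk (MV.lukasiewicz _ _) (MV.lukasiewicz _ _)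

/-- A homomorphism of MV-algebras: a map preserving `⊕`, `¬` and `0`. -/
structure IsHom {α β : Type*} [MV α] [MV β] (f : α → β) : Prop where
  map_zero : f MV.zero = MV.zero
  map_oplus : ∀ x y : α, f (MV.oplus x y) = MV.oplus (f x) (f y)
  map_neg : ∀ x : α, f (MV.neg x) = MV.neg (f x)

/-- An ideal of an MV-algebra: contains `0`, closed under `⊕`, downward closed. -/
structure IsIdeal {α : Type*} [MV α] (I : Set α) : Prop where
  zero_mem : MV.zero ∈ I
  oplus_mem : ∀ ⦃x⦄, x ∈ I → ∀ ⦃y⦄, y ∈ I → MV.oplus x y ∈ I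
  lower_mem : ∀ ⦃x⦄, x ∈ I → ∀ ⦃y⦄, MV.le y x → y ∈ I

/-- The kernel of a homomorphism. -/
def ker {α β : Type*} [MV α] [MV β] (f : α → β) : Set α := {x | f x = MV.zero}

/-- The radical of an MV-algebra: `Rad(A) = {a | n·a ≤ ¬a for all n}`
(the intersection of all maximal proper ideals). -/
def Rad (α : Type*) [MV α] : Set α :=
  {a | ∀ n : ℕ, MV.le (MV.nsmul n a) (MV.neg a)}

/-- `P(A) := Rad(A) ∪ ¬Rad(A)`. -/
def PSet (α : Type*) [MV α] : Set α :=
  Rad α ∪ {x | MV.neg x ∈ Rad α}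

/-- An MV-algebra is trivial if `0 = 1`. -/
def IsTrivial (α : Type*) [MV α] : Prop := (MV.zero : α) = MV.one

/-- An MV-algebra is semisimple if its radical is trivial. -/
def Semisimple (α : Type*) [MV α] : Prop := Rad α = ({MV.zero} : Set α)

/-- An MV-algebra is perfect if `A = Rad(A) ∪ ¬Rad(A)`. -/
def Perfect (α : Type*) [MV α] : Prop := ∀ a : α, a ∈ PSet α

/-- `q : α → Q` realizes `Q` as the quotient of `α` by the ideal `I`,
i.e. by the congruence `x ∼ y ↔ d(x,y) ∈ I`. -/
structure IsQuotientBy {α Q : Type*} [MV α] [MV Q] (I : Set α) (q : α → Q) : Prop where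
  hom : IsHom q
  surj : Function.Surjective q
  eq_iff : ∀ x y : α, q x = q y ↔ MV.dist x y ∈ I

namespace MV

variable {α : Type*} [MV α]

theorem zero_oplus (x : α) : oplus zero x = x := by
  rw [oplus_comm, oplus_zero]

theorem neg_one : neg (one : α) = zero := neg_neg _

theorem oplus_one (x : α) : oplus x one = one := oplus_neg_zero x

theorem one_oplus (x : α) : oplus one x = one := by
  rw [oplus_comm, oplus_one]

theorem neg_oplus_self (x : α) : oplus (neg x) x = one := by
  have h := lukasiewicz one x
  rwa [neg_one, zero_oplus, oplus_one] at h

theorem le_oplus_right (x z : α) : le x (oplus x z) := by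
  rw [le, oplus_assoc, neg_oplus_self, one_oplus]

theorem le.oplus_ominus {x y : α} (h : le x y) : oplus x (ominus y x) = y := by
  have h' := lukasiewicz x y
  rw [show oplus (neg x) y = one from h, neg_one, zero_oplus] at h'
  rw [oplus_comm, ominus, ← h']

theorem le.trans {x y z : α} (hxy : le x y) (hyz : le y z) : le x z := by
  rw [← hyz.oplus_ominus, ← hxy.oplus_ominus, ← oplus_assoc]
  exact le_oplus_right _ _

theorem le.antisymm {x y : α} (hxy : le x y) (hyx : le y x) : x = y := by
  have h := hxy.oplus_ominus
  rwa [ominus, show oplus (neg y) x = one from hyx, neg_one, oplus_zero] at h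

theorem le.neg {x y : α} (h : le x y) : le (neg y) (neg x) := by
  rw [le, neg_neg, oplus_comm]
  exact h

theorem le.oplus_left {x y : α} (h : le x y) (z : α) : le (oplus z x) (oplus z y) := by
  rw [← h.oplus_ominus, oplus_assoc]
  exact le_oplus_right _ _

theorem le.oplus {x y z w : α} (hxy : le x y) (hzw : le z w) :
    le (oplus x z) (oplus y w) := by
  refine (hzw.oplus_left x).trans ?_
  rw [oplus_comm x, oplus_comm y]
  exact hxy.oplus_left w

theorem zero_le (x : α) : le zero x := one_oplus x

theorem le.nsmul {x y : α} (h : le x y) (n : ℕ) : le (nsmul n x) (nsmul n y) := by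
  induction n with
  | zero => exact zero_le _
  | succ n ih => exact h.oplus ih

theorem ominus_le (x y : α) : le (ominus x y) x := by
  rw [le, ominus, neg_neg, oplus_comm (neg x), ← oplus_assoc, neg_oplus_self, oplus_one]

theorem ominus_self (x : α) : ominus x x = zero := by
  rw [ominus, neg_oplus_self, neg_one]

theorem le_of_ominus_eq_zero {x y : α} (h : ominus x y = zero) : le x y := by
  rw [le, one, ← h, ominus, neg_neg]

theorem nsmul_zero (n : ℕ) : nsmul n (zero : α) = zero := by
  induction n with
  | zero => rfl
  | succ n ih => rw [nsmul, ih, oplus_zero]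

theorem nsmul_mk {β : Type*} [MV β] (n : ℕ) (x : α) (y : β) :
    nsmul n (x, y) = (nsmul n x, nsmul n y) := by
  induction n with
  | zero => rfl
  | succ n ih => rw [nsmul, ih]; rfl

end MV

theorem zero_mem_Rad {α : Type*} [MV α] : (MV.zero : α) ∈ Rad α := fun n => by
  rw [MV.nsmul_zero]
  exact MV.zero_le _

theorem Rad_lower_mem {α : Type*} [MV α] {x y : α} (hx : x ∈ Rad α) (h : MV.le y x) :
    y ∈ Rad α :=
  fun n => ((h.nsmul n).trans (hx n)).trans h.neg

theorem mk_mem_Rad {α β : Type*} [MV α] [MV β] {x : α} {y : β}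
    (hx : x ∈ Rad α) (hy : y ∈ Rad β) : (x, y) ∈ Rad (α × β) := fun n => by
  rw [MV.nsmul_mk]
  exact Prod.ext (hx n) (hy n)

theorem IsHom.map_ominus {α β : Type*} [MV α] [MV β] {f : α → β} (hf : IsHom f) (x y : α) :
    f (MV.ominus x y) = MV.ominus (f x) (f y) := by
  simp only [MV.ominus, hf.map_neg, hf.map_oplus]

/-- Central extensions are normal: if `f : A → B` is a surjective homomorphism
and there are an MV-algebra `C` and a surjective homomorphism `g : C → B` such
that the projection `π_C : A ×_B C → C` restricts to a bijection
`Rad(A ×_B C) → Rad(C)`, then `ker f ∩ Rad A = {0}`, i.e. the restriction of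
`f` to `Rad(A)` is injective. -/
theorem central_is_normal {α β γ : Type*} [MV α] [MV β] [MV γ]
    {f : α → β} (hf : IsHom f) (hfs : Function.Surjective f)
    {g : γ → β} (hg : IsHom g) (hgs : Function.Surjective g)
    (hbij : Set.BijOn (Prod.snd : α × γ → γ)
      (Rad (α × γ) ∩ {p : α × γ | f p.1 = g p.2}) (Rad γ)) :
    ker f ∩ Rad α = ({MV.zero} : Set α) ∧ Set.InjOn f (Rad α) := by
  have key : ∀ a ∈ Rad α, f a = MV.zero → a = MV.zero := fun a ha hfa =>
    congrArg Prod.fst (hbij.injOn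
      (show (a, MV.zero) ∈ _ from ⟨mk_mem_Rad ha zero_mem_Rad, hfa.trans hg.map_zero.symm⟩)
      (show (MV.zero, MV.zero) ∈ _ from
        ⟨mk_mem_Rad zero_mem_Rad zero_mem_Rad, hf.map_zero.trans hg.map_zero.symm⟩) rfl)
  have le_of_eq : ∀ a ∈ Rad α, ∀ b, f a = f b → MV.le a b := fun a ha b hab =>
    MV.le_of_ominus_eq_zero (key _ (Rad_lower_mem ha (MV.ominus_le a b))
      (by rw [hf.map_ominus, hab, MV.ominus_self]))
  refine ⟨Set.Subset.antisymm (fun a ha => key a ha.2 ha.1) ?_, fun a ha b hb hab =>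
    (le_of_eq a ha b hab).antisymm (le_of_eq b hb a hab.symm)⟩
  rintro _ rfl
  exact ⟨hf.map_zero, zero_mem_Rad⟩

end MVPaper
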